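/- Let H be a finite-dimensional Hopf algebra over a field k, π : H → H̄ a surjective Hopf algebra map, and K a Hopf subalgebra of H with π(K) central in H̄ and contained in a central Hopf subalgebra Z̄ of H̄. If K and Z̄ are normal Hopf subalgebras, then there is a surjective Hopf algebra map H/HK⁺ → H̄/H̄Z̄⁺ and consequently dim_k(H̄)/dim_k(Z̄) divides dim_k(H)/dim_k(K). -/

import Mathlib

open TensorProduct

/-- A subalgebra of a Hopf algebra closed under comultiplication and antipode. -/
def IsHopfSubalgebra (k : Type*) {H : Type*} [CommRing k] [Ring H] [HopfAlgebra k H]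
    (K : Subalgebra k H) : Prop :=
  (∀ x ∈ K, Coalgebra.comul (R := k) x ∈
      LinearMap.range (TensorProduct.map K.toSubmodule.subtype K.toSubmodule.subtype)) ∧
    ∀ x ∈ K, HopfAlgebra.antipode (R := k) x ∈ K

/-- The left adjoint action `h ⊗ x ↦ h₍₁₎ x S(h₍₂₎)` of a Hopf algebra on itself. -/
noncomputable def adjL (k H : Type*) [CommRing k] [Ring H] [HopfAlgebra k H] :
    H ⊗[k] H →ₗ[k] H :=
  LinearMap.mul' k H ∘ₗ
    LinearMap.lTensor H
      (LinearMap.mul' k H ∘ₗ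
        TensorProduct.map LinearMap.id (HopfAlgebra.antipode (R := k)) ∘ₗ
        (TensorProduct.comm k H H).toLinearMap) ∘ₗ
    (TensorProduct.assoc k H H H).toLinearMap ∘ₗ
    LinearMap.rTensor H (Coalgebra.comul (R := k))

/-- The right adjoint action `h ⊗ x ↦ S(h₍₁₎) x h₍₂₎` of a Hopf algebra on itself. -/
noncomputable def adjR (k H : Type*) [CommRing k] [Ring H] [HopfAlgebra k H] :
    H ⊗[k] H →ₗ[k] H :=
  LinearMap.mul' k H ∘ₗ
    TensorProduct.map (HopfAlgebra.antipode (R := k))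
      (LinearMap.mul' k H ∘ₗ (TensorProduct.comm k H H).toLinearMap) ∘ₗ
    (TensorProduct.assoc k H H H).toLinearMap ∘ₗ
    LinearMap.rTensor H (Coalgebra.comul (R := k))

/-- A Hopf subalgebra is normal if it is stable under both adjoint actions. -/
def IsNormalHopfSubalgebra (k : Type*) {H : Type*} [CommRing k] [Ring H] [HopfAlgebra k H]
    (K : Subalgebra k H) : Prop :=
  ∀ (h : H), ∀ x ∈ K, adjL k H (h ⊗ₜ[k] x) ∈ K ∧ adjR k H (h ⊗ₜ[k] x) ∈ K

/-!
Let `K` be a Hopf algebra embedded in `H`, both finite-dimensional, and consider the ratio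
`dim Hom_K(V, H*) / dim V` for representations `V ≠ 0` of `K`. It is bounded, since
`dim Hom_K(-, H*)` is subadditive, and the maximal value `c` passes to nonzero subrepresentations
and quotients of a representation that attains it. It is also preserved by `V ↦ V ⊗ W` for every
representation `W ≠ 0` of `H`, because `Hom(W, Hom_K(V, H*))` embeds in `Hom_K(V ⊗ W, H*)`.
If `V` attains `c`, then so do the quotient `V ⊗ K*` of `V ⊗ H*` and the trivial representation,
which embeds in `V ⊗ K* = Hom(K, V)`; hence so do `k ⊗ H` and its subrepresentation `K`. Comparing
the trivial and the regular representation gives `dim H = dim K * dim Hom_K(k, H*)`, and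
`Hom_K(k, H*)` is the dual of `H / HK⁺`.

This dimension count of Nichols and Zoeller, applied to the transpose of a surjection of Hopf
algebras, shows that the dimension of a quotient Hopf algebra divides the dimension of the algebra.
If `K` is normal then `HK⁺` is a Hopf ideal and `dim (H / HK⁺) = dim H / dim K`, so it suffices to
apply this to the surjection `H / HK⁺ → H̄ / H̄Z̄⁺` induced by `π`.
-/

section Intertwiners

open Module

variable {k K : Type*} [CommRing k] [Ring K] [Algebra k K]
  {V V' V'' E : Type*} [AddCommGroup V] [Module k V] [AddCommGroup V'] [Module k V']
  [AddCommGroup V''] [Module k V''] [AddCommGroup E] [Module k E]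

/-- The space of `K`-linear maps between two representations of `K`. A representation is encoded
as an algebra map into an endomorphism algebra, so that several can live on the same space. -/
def intertwiners (ρ : K →ₐ[k] End k V) (σ : K →ₐ[k] End k E) : Submodule k (V →ₗ[k] E) where
  carrier := {f | ∀ x v, f (ρ x v) = σ x (f v)}
  add_mem' hf hg x v := by simp [hf x v, hg x v]
  zero_mem' _ _ := by simp
  smul_mem' c f hf x v := by simp [hf x v]

/-- The restriction of a representation to an invariant subspace. -/
def subRep (ρ : K →ₐ[k] End k V) (A : Submodule k V) (hA : ∀ x, ∀ v ∈ A, ρ x v ∈ A) :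
    K →ₐ[k] End k A :=
  .ofLinearMap
    { toFun := fun x ↦ (ρ x).restrict (hA x)
      map_add' := fun x y ↦ by ext; simp
      map_smul' := fun c x ↦ by ext; simp }
    (by ext; simp) (fun x y ↦ by ext; simp)

/-- The representation induced on the quotient by an invariant subspace. -/
def quotRep (ρ : K →ₐ[k] End k V) (A : Submodule k V) (hA : ∀ x, ∀ v ∈ A, ρ x v ∈ A) :
    K →ₐ[k] End k (V ⧸ A) :=
  .ofLinearMap
    { toFun := fun x ↦ A.mapQ A (ρ x) (hA x)
      map_add' := fun x y ↦ by ext; simp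
      map_smul' := fun c x ↦ by ext; simp }
    (by ext; simp) (fun x y ↦ by ext; simp)

lemma subtype_mem_intertwiners (ρ : K →ₐ[k] End k V) (A : Submodule k V)
    (hA : ∀ x, ∀ v ∈ A, ρ x v ∈ A) : A.subtype ∈ intertwiners (subRep ρ A hA) ρ :=
  fun _ _ ↦ rfl

lemma mkQ_mem_intertwiners (ρ : K →ₐ[k] End k V) (A : Submodule k V)
    (hA : ∀ x, ∀ v ∈ A, ρ x v ∈ A) : A.mkQ ∈ intertwiners ρ (quotRep ρ A hA) :=
  fun _ _ ↦ rfl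

lemma map_mem_range_of_mem_intertwiners {ρ : K →ₐ[k] End k V} {ρ' : K →ₐ[k] End k V'}
    {f : V' →ₗ[k] V} (hf : f ∈ intertwiners ρ' ρ) (x : K) :
    ∀ v ∈ LinearMap.range f, ρ x v ∈ LinearMap.range f := by
  rintro _ ⟨v, rfl⟩
  exact ⟨ρ' x v, hf x v⟩

lemma map_mem_ker_of_mem_intertwiners {ρ : K →ₐ[k] End k V} {ρ' : K →ₐ[k] End k V'}
    {g : V →ₗ[k] V'} (hg : g ∈ intertwiners ρ ρ') (x : K) :
    ∀ v ∈ LinearMap.ker g, ρ x v ∈ LinearMap.ker g := by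
  intro v hv
  rw [LinearMap.mem_ker] at hv ⊢
  rw [hg, hv, map_zero]

variable {ρ : K →ₐ[k] End k V} {ρ' : K →ₐ[k] End k V'} {ρ'' : K →ₐ[k] End k V''}

/-- Composing `K`-linear maps with a fixed `K`-linear map on the right. -/
def precompIntertwiners {f : V' →ₗ[k] V} (hf : f ∈ intertwiners ρ' ρ) (σ : K →ₐ[k] End k E) :
    intertwiners ρ σ →ₗ[k] intertwiners ρ' σ :=
  (LinearMap.lcomp k E f).restrict fun T hT x v ↦ by simp [hf x v, hT x (f v)]

lemma precompIntertwiners_injective {g : V →ₗ[k] V''} (hg : g ∈ intertwiners ρ ρ'')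
    (hgs : Function.Surjective g) (σ : K →ₐ[k] End k E) :
    Function.Injective (precompIntertwiners hg σ) := by
  intro S T hST
  refine Subtype.ext (LinearMap.ext fun w ↦ ?_)
  obtain ⟨v, rfl⟩ := hgs w
  exact congr($hST.1 v)

lemma ker_precompIntertwiners_le_range {f : V' →ₗ[k] V} {g : V →ₗ[k] V''}
    (hf : f ∈ intertwiners ρ' ρ) (hg : g ∈ intertwiners ρ ρ'') (hgs : Function.Surjective g)
    (hfg : LinearMap.ker g ≤ LinearMap.range f) (σ : K →ₐ[k] End k E) :
    LinearMap.ker (precompIntertwiners hf σ) ≤ LinearMap.range (precompIntertwiners hg σ) := by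
  intro T hT
  have hker : LinearMap.ker g ≤ LinearMap.ker T.1 := fun v hv ↦ by
    obtain ⟨u, rfl⟩ := hfg hv
    exact congr($(LinearMap.mem_ker.1 hT).1 u)
  let S : V'' →ₗ[k] E :=
    (LinearMap.ker g).liftQ T.1 hker ∘ₗ (g.quotKerEquivOfSurjective hgs).symm.toLinearMap
  have hS (v : V) : S (g v) = T.1 v := by
    have : (g.quotKerEquivOfSurjective hgs).symm (g v) = (LinearMap.ker g).mkQ v := by
      rw [LinearEquiv.symm_apply_eq]; rfl
    simp [S, this]
  refine ⟨⟨S, fun x w ↦ ?_⟩, Subtype.ext (LinearMap.ext hS)⟩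
  obtain ⟨v, rfl⟩ := hgs w
  rw [← hg, hS, hS, T.2]

end Intertwiners

section HomRatio

open Module

variable {k K : Type*} [Field k] [Ring K] [Algebra k K]
  {V V' V'' E : Type*} [AddCommGroup V] [Module k V] [AddCommGroup V'] [Module k V']
  [AddCommGroup V''] [Module k V''] [AddCommGroup E] [Module k E]
  {ρ : K →ₐ[k] End k V} {ρ' : K →ₐ[k] End k V'} {ρ'' : K →ₐ[k] End k V''}
  {σ : K →ₐ[k] End k E} {c : ℚ}

lemma finrank_intertwiners_le_mul [FiniteDimensional k V] [FiniteDimensional k E]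
    (ρ : K →ₐ[k] End k V) (σ : K →ₐ[k] End k E) :
    finrank k (intertwiners ρ σ) ≤ finrank k V * finrank k E :=
  (Submodule.finrank_le _).trans (finrank_linearMap k k V E).le

lemma finrank_intertwiners_le_of_surjective [FiniteDimensional k V] [FiniteDimensional k E]
    {g : V →ₗ[k] V''} (hg : g ∈ intertwiners ρ ρ'') (hgs : Function.Surjective g)
    (σ : K →ₐ[k] End k E) :
    finrank k (intertwiners ρ'' σ) ≤ finrank k (intertwiners ρ σ) :=
  LinearMap.finrank_le_finrank_of_injective (precompIntertwiners_injective hg hgs σ)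

lemma finrank_intertwiners_le_add [FiniteDimensional k V] [FiniteDimensional k V']
    [FiniteDimensional k V''] [FiniteDimensional k E] {f : V' →ₗ[k] V} {g : V →ₗ[k] V''}
    (hf : f ∈ intertwiners ρ' ρ) (hg : g ∈ intertwiners ρ ρ'') (hgs : Function.Surjective g)
    (hfg : LinearMap.ker g ≤ LinearMap.range f) (σ : K →ₐ[k] End k E) :
    finrank k (intertwiners ρ σ) ≤
      finrank k (intertwiners ρ' σ) + finrank k (intertwiners ρ'' σ) := by
  rw [← (precompIntertwiners hf σ).finrank_range_add_finrank_ker]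
  exact add_le_add (Submodule.finrank_le _) <|
    (Submodule.finrank_mono (ker_precompIntertwiners_le_range hf hg hgs hfg σ)).trans
      (LinearMap.finrank_range_le _)

lemma exists_pi_finrank_intertwiners_le [FiniteDimensional k V] [FiniteDimensional k E]
    (ρ : K →ₐ[k] End k V) (σ : K →ₐ[k] End k E) :
    ∃ ρ' : K →ₐ[k] End k (Fin (finrank k V) → k),
      finrank k (intertwiners ρ σ) ≤ finrank k (intertwiners ρ' σ) := by
  let e := (finBasis k V).equivFun
  refine ⟨(e.conjAlgEquiv k).toAlgHom.comp ρ, ?_⟩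
  exact finrank_intertwiners_le_of_surjective (g := e.symm.toLinearMap) (fun x v ↦ by simp)
    e.symm.surjective σ

/-- The number `c` bounds the ratio `dim Hom_K(V, E) / dim V` over all finite-dimensional
representations `V` of `K`. -/
def IsHomRatioBound (σ : K →ₐ[k] End k E) (c : ℚ) : Prop :=
  ∀ (n : ℕ) (ρ : K →ₐ[k] End k (Fin n → k)), (finrank k (intertwiners ρ σ) : ℚ) ≤ c * n

/-- The representation `ρ` on `V` satisfies `dim Hom_K(V, E) = c * dim V`. -/
def HasHomRatio (ρ : K →ₐ[k] End k V) (σ : K →ₐ[k] End k E) (c : ℚ) : Prop :=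
  (finrank k (intertwiners ρ σ) : ℚ) = c * finrank k V

lemma IsHomRatioBound.finrank_le [FiniteDimensional k V] [FiniteDimensional k E]
    (hc : IsHomRatioBound σ c) (ρ : K →ₐ[k] End k V) :
    (finrank k (intertwiners ρ σ) : ℚ) ≤ c * finrank k V := by
  obtain ⟨ρ', hρ'⟩ := exists_pi_finrank_intertwiners_le ρ σ
  exact (Nat.cast_le.2 hρ').trans (hc _ ρ')

lemma exists_invariant_submodule_finrank_le [FiniteDimensional k K] [Nontrivial V]
    (ρ : K →ₐ[k] End k V) : ∃ A : Submodule k V,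
      (∀ x, ∀ v ∈ A, ρ x v ∈ A) ∧ A ≠ ⊥ ∧ finrank k A ≤ finrank k K := by
  obtain ⟨v, hv⟩ := exists_ne (0 : V)
  refine ⟨LinearMap.range (LinearMap.applyₗ v ∘ₗ ρ.toLinearMap), ?_, ?_,
    LinearMap.finrank_range_le _⟩
  · rintro x _ ⟨y, rfl⟩
    exact ⟨x * y, by simp⟩
  · exact (Submodule.ne_bot_iff _).2 ⟨v, ⟨1, by simp⟩, hv⟩

/-- Representations of dimension larger than `dim K` are not simple, so subadditivity reduces the
bound to those of dimension at most `dim K`. -/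
lemma isHomRatioBound_of_le_finrank [FiniteDimensional k K] [FiniteDimensional k E]
    (hc : ∀ n ≤ finrank k K, ∀ ρ : K →ₐ[k] End k (Fin n → k),
      (finrank k (intertwiners ρ σ) : ℚ) ≤ c * n) : IsHomRatioBound σ c := by
  intro n
  induction n using Nat.strong_induction_on with
  | _ n ih =>
  intro ρ
  obtain hn | hn := le_or_gt n (finrank k K)
  · exact hc n hn ρ
  have : Nonempty (Fin n) := ⟨⟨0, by omega⟩⟩
  obtain ⟨A, hA, hA₀, hAK⟩ := exists_invariant_submodule_finrank_le ρ
  have hadd : finrank k ((Fin n → k) ⧸ A) + finrank k A = n := by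
    simpa using A.finrank_quotient_add_finrank
  have hApos : 0 < finrank k A := Submodule.one_le_finrank_iff.2 hA₀
  obtain ⟨ρ₁, hρ₁⟩ := exists_pi_finrank_intertwiners_le (subRep ρ A hA) σ
  obtain ⟨ρ₂, hρ₂⟩ := exists_pi_finrank_intertwiners_le (quotRep ρ A hA) σ
  calc (finrank k (intertwiners ρ σ) : ℚ)
    _ ≤ finrank k (intertwiners ρ₁ σ) + finrank k (intertwiners ρ₂ σ) := by
      have := finrank_intertwiners_le_add (subtype_mem_intertwiners ρ A hA)
        (mkQ_mem_intertwiners ρ A hA) A.mkQ_surjective (by simp) σ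
      exact_mod_cast this.trans (add_le_add hρ₁ hρ₂)
    _ ≤ c * finrank k A + c * finrank k ((Fin n → k) ⧸ A) :=
      add_le_add (hc _ hAK ρ₁) (ih _ (by omega) ρ₂)
    _ = c * n := by rw [← mul_add, ← Nat.cast_add, add_comm, hadd]

lemma exists_isHomRatioBound_hasHomRatio [FiniteDimensional k K] [Nontrivial K]
    [FiniteDimensional k E] (σ : K →ₐ[k] End k E) :
    ∃ (c : ℚ) (n : ℕ) (ρ : K →ₐ[k] End k (Fin n → k)),
      0 < n ∧ IsHomRatioBound σ c ∧ HasHomRatio ρ σ c := by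
  let s : Set (ℕ × ℕ) := {q | 0 < q.1 ∧ q.1 ≤ finrank k K ∧
    ∃ ρ : K →ₐ[k] End k (Fin q.1 → k), finrank k (intertwiners ρ σ) = q.2}
  have hs : s.Finite := by
    refine ((Set.finite_Iic (finrank k K)).prod
      (Set.finite_Iic (finrank k K * finrank k E))).subset ?_
    rintro ⟨n, p⟩ ⟨-, hn, ρ, hρ⟩
    refine ⟨hn, hρ.symm.le.trans <| (finrank_intertwiners_le_mul ρ σ).trans ?_⟩
    simpa using Nat.mul_le_mul_right _ hn
  have hne : s.Nonempty := by
    obtain ⟨ρ, -⟩ := exists_pi_finrank_intertwiners_le (Algebra.lsmul k k K) σ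
    exact ⟨(finrank k K, finrank k (intertwiners ρ σ)), finrank_pos, le_rfl, ρ, rfl⟩
  obtain ⟨⟨n, p⟩, ⟨hn, -, ρ, hρ⟩, hmax⟩ := Set.exists_max_image s
    (fun q : ℕ × ℕ ↦ (q.2 / q.1 : ℚ)) hs hne
  simp only at hn ρ hρ hmax
  refine ⟨p / n, n, ρ, hn, isHomRatioBound_of_le_finrank fun m hm ρ' ↦ ?_, ?_⟩
  · obtain rfl | hm₀ := m.eq_zero_or_pos
    · have := finrank_intertwiners_le_mul ρ' σ
      simp_all
    · rw [← div_le_iff₀ (by exact_mod_cast hm₀)]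
      exact hmax (m, _) ⟨hm₀, hm, ρ', rfl⟩
  · have : (n : ℚ) ≠ 0 := by exact_mod_cast hn.ne'
    simp [HasHomRatio, hρ, this]

variable [FiniteDimensional k V] [FiniteDimensional k V'] [FiniteDimensional k E]

/-- Both the subrepresentation and the quotient satisfy the bound, and by subadditivity neither
can fall short of it. -/
lemma HasHomRatio.of_injective (h : HasHomRatio ρ σ c) (hc : IsHomRatioBound σ c)
    {f : V' →ₗ[k] V} (hf : f ∈ intertwiners ρ' ρ) (hinj : Function.Injective f) :
    HasHomRatio ρ' σ c := by
  let ρq := quotRep ρ _ (map_mem_range_of_mem_intertwiners hf)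
  have hsub : (finrank k (intertwiners ρ σ) : ℚ) ≤
      finrank k (intertwiners ρ' σ) + finrank k (intertwiners ρq σ) := by
    exact_mod_cast finrank_intertwiners_le_add hf (mkQ_mem_intertwiners ρ _ _)
      (Submodule.mkQ_surjective _) (by simp) σ
  have hadd : (finrank k V : ℚ) = finrank k (V ⧸ LinearMap.range f) + finrank k V' := by
    rw [← LinearMap.finrank_range_of_inj hinj]
    exact_mod_cast (LinearMap.range f).finrank_quotient_add_finrank.symm
  have hquot := hc.finrank_le ρq
  refine (hc.finrank_le ρ').antisymm ?_
  rw [h, hadd] at hsub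
  linarith

lemma HasHomRatio.of_surjective (h : HasHomRatio ρ σ c) (hc : IsHomRatioBound σ c)
    {g : V →ₗ[k] V'} (hg : g ∈ intertwiners ρ ρ') (hsurj : Function.Surjective g) :
    HasHomRatio ρ' σ c := by
  let ρs := subRep ρ _ (map_mem_ker_of_mem_intertwiners hg)
  have hsub : (finrank k (intertwiners ρ σ) : ℚ) ≤
      finrank k (intertwiners ρs σ) + finrank k (intertwiners ρ' σ) := by
    exact_mod_cast finrank_intertwiners_le_add (subtype_mem_intertwiners ρ _ _) hg hsurj
      (by simp) σ
  have hadd : (finrank k V : ℚ) = finrank k V' + finrank k (LinearMap.ker g) := by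
    rw [← g.finrank_range_add_finrank_ker, LinearMap.range_eq_top.2 hsurj, finrank_top]
    push_cast; rfl
  have hker := hc.finrank_le ρs
  refine (hc.finrank_le ρ').antisymm ?_
  rw [h, hadd] at hsub
  linarith

end HomRatio

section TensorRepresentations

open Module Coalgebra HopfAlgebra Bialgebra

variable {k K H : Type*} [CommRing k] [Ring K] [Ring H]
  {V W W' : Type*} [AddCommGroup V] [Module k V] [AddCommGroup W] [Module k W]
  [AddCommGroup W'] [Module k W']

/-- The diagonal representation of a bialgebra on a tensor product. -/
noncomputable def tensorRep [Bialgebra k K] (ρ : K →ₐ[k] End k V) (τ : K →ₐ[k] End k W) :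
    K →ₐ[k] End k (V ⊗[k] W) :=
  endTensorEndAlgHom.comp ((Algebra.TensorProduct.map ρ τ).comp (comulAlgHom k K))

lemma tensorRep_tmul [Bialgebra k K] (ρ : K →ₐ[k] End k V) (τ : K →ₐ[k] End k W) {x : K}
    {ι : Type*} (r : Repr k x ι) (v : V) (w : W) :
    tensorRep ρ τ x (v ⊗ₜ w) = ∑ j ∈ r.index, ρ (r.left j) v ⊗ₜ τ (r.right j) w := by
  simp [tensorRep, ← r.eq, endTensorEndAlgHom_apply]

lemma lTensor_mem_intertwiners [Bialgebra k K] (ρ : K →ₐ[k] End k V) {τ : K →ₐ[k] End k W}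
    {τ' : K →ₐ[k] End k W'} {f : W →ₗ[k] W'} (hf : f ∈ intertwiners τ τ') :
    f.lTensor V ∈ intertwiners (tensorRep ρ τ) (tensorRep ρ τ') := by
  intro x u
  induction u with
  | zero => simp
  | add u u' hu hu' => simp [hu, hu']
  | tmul v w => simp [tensorRep_tmul _ _ (ℛ k x), hf _ _]

/-- The action `(x • T) h = T (h * i x)` of an algebra on the dual of an algebra over it. -/
noncomputable def coregularRep [Algebra k K] [Algebra k H] (i : K →ₐ[k] H) :
    K →ₐ[k] End k (Dual k H) :=
  .ofLinearMap
    { toFun := fun x ↦ (LinearMap.mulRight k (i x)).dualMap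
      map_add' := fun x y ↦ by ext; simp [mul_add]
      map_smul' := fun c x ↦ by ext; simp }
    (by ext; simp) (fun x y ↦ by ext; simp [mul_assoc])

@[simp]
lemma coregularRep_apply [Algebra k K] [Algebra k H] (i : K →ₐ[k] H) (x : K) (T : Dual k H)
    (h : H) : coregularRep i x T h = T (h * i x) := rfl

/-- In the convolution algebra `Hom(H, H ⊗ H)` the comultiplication is the product of the two
inclusions, and the antipode inverts the second one. -/
lemma sum_comul_mul_one_tmul_antipode [HopfAlgebra k H] {a : H} {ι : Type*} (r : Repr k a ι) :
    ∑ j ∈ r.index, comul (R := k) (r.left j) * (1 ⊗ₜ antipode k (r.right j)) =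
      a ⊗ₜ[k] (1 : H) := by
  let L : H →ₐ[k] H ⊗[k] H := Algebra.TensorProduct.includeLeft
  let R : H →ₐ[k] H ⊗[k] H := Algebra.TensorProduct.includeRight
  have hcomul : WithConv.toConv (comul (R := k) (A := H)) =
      WithConv.toConv L.toLinearMap * WithConv.toConv R.toLinearMap := by
    ext h
    simp [(ℛ k h).convMul_apply, L, R, (ℛ k h).eq]
  have hinv : WithConv.toConv R.toLinearMap *
      WithConv.toConv (R.toLinearMap ∘ₗ antipode k) = 1 := by
    ext h
    simp [(ℛ k h).convMul_apply, ← map_mul, ← map_sum, sum_mul_antipode_eq_algebraMap_counit]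
  have := congr($(show WithConv.toConv (comul (R := k) (A := H)) *
      WithConv.toConv (R.toLinearMap ∘ₗ antipode k) = WithConv.toConv L.toLinearMap by
        rw [hcomul, mul_assoc, hinv, mul_one]) a)
  simpa [r.convMul_apply, L, R] using this

section Twist

variable [Bialgebra k H] (σ : H →ₐ[k] End k W)

/-- The form `a ⊗ b ↦ S (σ b w) v a`, for a family `S` of maps `V → H*` indexed by `W`. -/
noncomputable def twistForm (S : W →ₗ[k] V →ₗ[k] Dual k H) (v : V) (w : W) : Dual k (H ⊗[k] H) :=
  TensorProduct.lift (S.flip v ∘ₗ σ.toLinearMap.flip w).flip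

@[simp]
lemma twistForm_tmul (S : W →ₗ[k] V →ₗ[k] Dual k H) (v : V) (w : W) (a b : H) :
    twistForm σ S v w (a ⊗ₜ b) = S (σ b w) v a := by
  simp [twistForm]

lemma twistForm_mul_one_tmul (S : W →ₗ[k] V →ₗ[k] Dual k H) (v : V) (w : W) (t : H ⊗[k] H)
    (g : H) : twistForm σ S v w (t * (1 ⊗ₜ g)) = twistForm σ S v (σ g w) t := by
  induction t with
  | zero => simp
  | add t t' ht ht' => simp only [add_mul, map_add, ht, ht']
  | tmul a b => simp

/-- The map `v ⊗ w ↦ (h ↦ S (σ h₂ w) v h₁)`, for a family `S` of maps `V → H*` indexed by `W`. -/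
noncomputable def twist :
    (W →ₗ[k] V →ₗ[k] Dual k H) →ₗ[k] V ⊗[k] W →ₗ[k] Dual k H where
  toFun S := TensorProduct.lift <| LinearMap.mk₂ k
    (fun v w ↦ twistForm σ S v w ∘ₗ comul)
    (fun v v' w ↦ by ext h; simp [← (ℛ k h).eq, Finset.sum_add_distrib])
    (fun c v w ↦ by ext h; simp [← (ℛ k h).eq, Finset.mul_sum])
    (fun v w w' ↦ by ext h; simp [← (ℛ k h).eq, Finset.sum_add_distrib])
    (fun c v w ↦ by ext h; simp [← (ℛ k h).eq, Finset.mul_sum])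
  map_add' S T := TensorProduct.ext' fun v w ↦ by
    ext h; simp [← (ℛ k h).eq, Finset.sum_add_distrib]
  map_smul' c S := TensorProduct.ext' fun v w ↦ by
    ext h; simp [← (ℛ k h).eq, Finset.mul_sum]

lemma twist_tmul (S : W →ₗ[k] V →ₗ[k] Dual k H) (v : V) (w : W) (h : H) :
    twist σ S (v ⊗ₜ w) h = twistForm σ S v w (comul h) := rfl

variable [Bialgebra k K] (i : K →ₐc[k] H) {ρ : K →ₐ[k] End k V}

lemma twist_mem_intertwiners {S : W →ₗ[k] V →ₗ[k] Dual k H}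
    (hS : ∀ w, S w ∈ intertwiners ρ (coregularRep (i : K →ₐ[k] H))) :
    twist σ S ∈ intertwiners (tensorRep ρ (σ.comp (i : K →ₐ[k] H)))
      (coregularRep (i : K →ₐ[k] H)) := by
  have hS' (w : W) (x : K) (v : V) (a : H) : S w (ρ x v) a = S w v (a * i x) :=
    congr($(hS w x v) a)
  intro x u
  induction u with
  | zero => simp
  | add u u' hu hu' => simp only [map_add, hu, hu']
  | tmul v w =>
    ext h
    rw [tensorRep_tmul _ _ (ℛ k x)]
    have hmul := ((ℛ k h).mul ((ℛ k x).induced i)).eq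
    simp [twist_tmul, ← hmul, ← (ℛ k h).eq, hS', Finset.sum_product_right]

/-- The inverse of the Galois map `a ⊗ b ↦ Δ(a) (1 ⊗ b)` recovers `S` from its twist. -/
lemma eq_sum_twist {K : Type*} [Ring K] [HopfAlgebra k K] (σ : K →ₐ[k] End k W)
    (S : W →ₗ[k] V →ₗ[k] Dual k K) (w : W) (v : V) {h : K} {ι : Type*} (r : Repr k h ι) :
    S w v h = ∑ j ∈ r.index, twist σ S (v ⊗ₜ σ (antipode k (r.right j)) w) (r.left j) := by
  calc S w v h
    _ = twistForm σ S v w (h ⊗ₜ 1) := by simp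
    _ = _ := by
      simp only [← sum_comul_mul_one_tmul_antipode r, map_sum, twistForm_mul_one_tmul, twist_tmul]

end Twist

variable [HopfAlgebra k H] [Bialgebra k K] (i : K →ₐc[k] H) (ρ : K →ₐ[k] End k V)
  (σ : H →ₐ[k] End k W)

/-- The twist, as a map from families of intertwiners to intertwiners. -/
noncomputable def intertwinersTwist :
    (W →ₗ[k] intertwiners ρ (coregularRep (i : K →ₐ[k] H))) →ₗ[k]
      intertwiners (tensorRep ρ (σ.comp (i : K →ₐ[k] H)))
        (coregularRep (i : K →ₐ[k] H)) :=
  LinearMap.codRestrict _ (twist σ ∘ₗ (Submodule.subtype _).compRight k)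
    fun S ↦ twist_mem_intertwiners σ i fun w ↦ (S w).2

lemma intertwinersTwist_injective : Function.Injective (intertwinersTwist i ρ σ) := by
  intro S T hST
  have htwist : twist σ ((Submodule.subtype _) ∘ₗ S) = twist σ ((Submodule.subtype _) ∘ₗ T) :=
    congr($hST.1)
  ext w v h
  exact (eq_sum_twist σ (Submodule.subtype _ ∘ₗ S) w v (ℛ k h)).trans <|
    htwist ▸ (eq_sum_twist σ (Submodule.subtype _ ∘ₗ T) w v (ℛ k h)).symm

end TensorRepresentations

section TensorHomRatio

open Module

variable {k K H V W : Type*} [Field k] [Ring K] [Bialgebra k K] [Ring H] [HopfAlgebra k H]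
  [FiniteDimensional k H] [AddCommGroup V] [Module k V] [FiniteDimensional k V]
  [AddCommGroup W] [Module k W] [FiniteDimensional k W] (i : K →ₐc[k] H)

set_option maxSynthPendingDepth 3 in
lemma finrank_mul_finrank_intertwiners_le (ρ : K →ₐ[k] End k V) (σ : H →ₐ[k] End k W) :
    finrank k W * finrank k (intertwiners ρ (coregularRep (i : K →ₐ[k] H))) ≤
      finrank k (intertwiners (tensorRep ρ (σ.comp (i : K →ₐ[k] H)))
        (coregularRep (i : K →ₐ[k] H))) := by
  rw [← finrank_linearMap k k W]
  exact LinearMap.finrank_le_finrank_of_injective (intertwinersTwist_injective i ρ σ)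

lemma HasHomRatio.tensorRep {ρ : K →ₐ[k] End k V} {c : ℚ}
    (h : HasHomRatio ρ (coregularRep (i : K →ₐ[k] H)) c)
    (hc : IsHomRatioBound (coregularRep (i : K →ₐ[k] H)) c) (σ : H →ₐ[k] End k W) :
    HasHomRatio (tensorRep ρ (σ.comp (i : K →ₐ[k] H)))
      (coregularRep (i : K →ₐ[k] H)) c := by
  refine (hc.finrank_le _).antisymm ?_
  calc c * finrank k (V ⊗[k] W)
    _ = finrank k W *
        finrank k (intertwiners ρ (coregularRep (i : K →ₐ[k] H))) := by
      rw [h, finrank_tensorProduct]; push_cast; ring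
    _ ≤ _ := by exact_mod_cast finrank_mul_finrank_intertwiners_le i ρ σ

end TensorHomRatio

section Contragredient

open Module Coalgebra HopfAlgebra

variable {k K V W : Type*} [CommRing k] [Ring K] [AddCommGroup V] [Module k V]
  [AddCommGroup W] [Module k W]

variable (k K) in
/-- The one-dimensional representation given by the counit. -/
noncomputable def trivRep [Bialgebra k K] : K →ₐ[k] End k k :=
  (Algebra.ofId k (End k k)).comp (Bialgebra.counitAlgHom k K)

@[simp]
lemma trivRep_apply [Bialgebra k K] (x : K) (c : k) : trivRep k K x c = counit (R := k) x * c := by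
  simp [trivRep, Algebra.ofId_apply, algebraMap_end_apply]

lemma lid_symm_mem_intertwiners [Bialgebra k K] (τ : K →ₐ[k] End k W) :
    (TensorProduct.lid k W).symm.toLinearMap ∈ intertwiners τ (tensorRep (trivRep k K) τ) := by
  intro x w
  have h := congr((τ.toLinearMap.flip w).lTensor k $(sum_counit_tmul_eq (R := k) (ℛ k x)))
  simp only [map_sum, LinearMap.lTensor_tmul] at h
  simpa [tensorRep_tmul _ _ (ℛ k x)] using h.symm

variable [HopfAlgebra k K]

/-- The contragredient representation. -/
noncomputable def dualRep (ρ : K →ₐ[k] End k V) : K →ₐ[k] End k (Dual k V) :=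
  .ofLinearMap
    { toFun := fun x ↦ (ρ (antipode k x)).dualMap
      map_add' := fun x y ↦ by ext; simp
      map_smul' := fun c x ↦ by ext; simp }
    (by ext; simp) (fun x y ↦ by ext; simp [antipode_mul_antidistrib])

@[simp]
lemma dualRep_apply (ρ : K →ₐ[k] End k V) (x : K) (f : Dual k V) (v : V) :
    dualRep ρ x f v = f (ρ (antipode k x) v) := rfl

lemma map_antipode {H : Type*} [Ring H] [HopfAlgebra k H] (i : K →ₐc[k] H) (x : K) :
    i (antipode k x) = antipode k (i x) := by
  let I : K →ₗ[k] H := (i : K →ₐ[k] H).toLinearMap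
  suffices WithConv.toConv (I ∘ₗ antipode k) = WithConv.toConv (antipode k ∘ₗ I) from congr($this x)
  refine left_inv_eq_right_inv (a := WithConv.toConv I) ?_ ?_ <;> ext a
  · simp [(ℛ k a).convMul_apply, I, ← map_mul, ← map_sum, sum_antipode_mul_eq_algebraMap_counit,
      AlgHomClass.commutes]
  · simpa [(ℛ k a).convMul_apply, I] using
      sum_mul_antipode_eq_algebraMap_counit (R := k) ((ℛ k a).induced i)

lemma dualMap_mem_intertwiners {H : Type*} [Ring H] [HopfAlgebra k H] (i : K →ₐc[k] H) :
    (i : K →ₐ[k] H).toLinearMap.dualMap ∈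
      intertwiners ((dualRep (Algebra.lsmul k k H)).comp (i : K →ₐ[k] H))
        (dualRep (Algebra.lsmul k k K)) := by
  intro x f
  ext y
  simp [map_antipode]

variable [Module.Finite k W] [Projective k W]

variable (k V W) in
/-- The canonical isomorphism `V ⊗ W* ≃ Hom(W, V)`. -/
noncomputable def tensorDualEquivHom : V ⊗[k] Dual k W ≃ₗ[k] W →ₗ[k] V :=
  TensorProduct.comm k V (Dual k W) ≪≫ₗ dualTensorHomEquiv k W V

lemma tensorDualEquivHom_tensorRep (ρ : K →ₐ[k] End k V) (τ : K →ₐ[k] End k W) {x : K}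
    {ι : Type*} (r : Repr k x ι) (t : V ⊗[k] Dual k W) :
    tensorDualEquivHom k V W (tensorRep ρ (dualRep τ) x t) =
      ∑ j ∈ r.index,
        ρ (r.left j) ∘ₗ tensorDualEquivHom k V W t ∘ₗ τ (antipode k (r.right j)) := by
  induction t with
  | zero => simp
  | add u u' hu hu' =>
    simp only [map_add, hu, hu', LinearMap.add_comp, LinearMap.comp_add, Finset.sum_add_distrib]
  | tmul v f => ext w; simp [tensorDualEquivHom, tensorRep_tmul _ _ r, dualTensorHom_apply]

/-- Intertwiners `W → V` are invariant under the action on `Hom(W, V) = V ⊗ W*`. -/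
lemma toSpanSingleton_mem_intertwiners {ρ : K →ₐ[k] End k V} {τ : K →ₐ[k] End k W}
    {f : W →ₗ[k] V} (hf : f ∈ intertwiners τ ρ) :
    LinearMap.toSpanSingleton k _ ((tensorDualEquivHom k V W).symm f) ∈
      intertwiners (trivRep k K) (tensorRep ρ (dualRep τ)) := by
  intro x c
  apply (tensorDualEquivHom k V W).injective
  have hinv : ∑ j ∈ (ℛ k x).index, ρ ((ℛ k x).left j) ∘ₗ f ∘ₗ τ (antipode k ((ℛ k x).right j)) =
      counit (R := k) x • f := by
    ext w
    simp only [LinearMap.sum_apply, LinearMap.comp_apply, ← hf _ _, ← End.mul_apply, ← map_mul]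
    rw [← map_sum, ← LinearMap.sum_apply, ← map_sum, sum_mul_antipode_eq_algebraMap_counit]
    simp [algebraMap_end_apply]
  simp [tensorDualEquivHom_tensorRep ρ τ (ℛ k x), hinv, smul_smul, mul_comm]

end Contragredient

section InvariantForms

open Module Coalgebra

variable {k K H : Type*} [CommRing k] [Ring K] [Ring H]

/-- The linear forms on `H` that are right invariant under `K`; this is the dual space of
`H / H i(K⁺)`. -/
def invariantForms [Algebra k K] [Bialgebra k H] (i : K →ₐ[k] H) : Submodule k (Dual k H) where
  carrier := {T | ∀ h x, T (h * i x) = counit (R := k) (i x) * T h}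
  add_mem' hS hT h x := by simp [hS h x, hT h x, mul_add]
  zero_mem' _ _ := by simp
  smul_mem' c T hT h x := by simp [hT h x, mul_left_comm]

lemma mem_invariantForms_iff [Bialgebra k K] [Bialgebra k H] {i : K →ₐc[k] H} {T : Dual k H} :
    T ∈ invariantForms (i : K →ₐ[k] H) ↔
      ∀ x, coregularRep (i : K →ₐ[k] H) x T = counit (R := k) x • T := by
  have hi (x : K) : counit (R := k) (i x) = counit (R := k) x :=
    CoalgHomClass.counit_comp_apply i x
  change (∀ h x, T (h * i x) = counit (R := k) (i x) * T h) ↔ _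
  simp only [hi, LinearMap.ext_iff]
  exact forall_comm

/-- Intertwiners out of the trivial representation are invariant forms. -/
noncomputable def intertwinersTrivRepEquiv [Bialgebra k K] [Bialgebra k H] (i : K →ₐc[k] H) :
    intertwiners (trivRep k K) (coregularRep (i : K →ₐ[k] H)) ≃ₗ[k]
      invariantForms (i : K →ₐ[k] H) where
  toFun S := ⟨S.1 1, mem_invariantForms_iff.2 fun x ↦ by
    rw [← S.2 x 1, trivRep_apply, ← smul_eq_mul, map_smul]⟩
  invFun T := ⟨LinearMap.toSpanSingleton k _ T.1, fun x c ↦ by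
    simp [mem_invariantForms_iff.1 T.2 x, smul_smul, mul_comm]⟩
  map_add' _ _ := rfl
  map_smul' _ _ := rfl
  left_inv S := by ext; simp
  right_inv T := by ext; simp

/-- Intertwiners out of the regular representation are determined by their value at `1`. -/
noncomputable def intertwinersLsmulEquiv [Algebra k K] [Algebra k H] (i : K →ₐ[k] H) :
    intertwiners (Algebra.lsmul k k K) (coregularRep i) ≃ₗ[k] Dual k H where
  toFun S := S.1 1
  invFun T := ⟨(coregularRep i).toLinearMap.flip T, fun x y ↦ by simp⟩
  map_add' _ _ := rfl
  map_smul' _ _ := rfl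
  left_inv S := Subtype.ext <| LinearMap.ext fun x ↦ by simpa using (S.2 x 1).symm
  right_inv T := by ext; simp

end InvariantForms

section NicholsZoeller

open Module

variable {k K H : Type*} [Field k] [Ring K] [HopfAlgebra k K] [Ring H] [HopfAlgebra k H]
  [FiniteDimensional k H] {i : K →ₐc[k] H} {c : ℚ}

lemma HasHomRatio.trivRep_of_nontrivial [FiniteDimensional k K] (hi : Function.Injective i)
    (hc : IsHomRatioBound (coregularRep (i : K →ₐ[k] H)) c) {V : Type*} [AddCommGroup V]
    [Module k V] [FiniteDimensional k V] [Nontrivial V] {ρ : K →ₐ[k] End k V}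
    (h : HasHomRatio ρ (coregularRep (i : K →ₐ[k] H)) c) :
    HasHomRatio (trivRep k K) (coregularRep (i : K →ₐ[k] H)) c := by
  obtain ⟨v, hv⟩ := exists_ne (0 : V)
  have hdual : HasHomRatio (_root_.tensorRep ρ (dualRep (Algebra.lsmul k k K)))
      (coregularRep (i : K →ₐ[k] H)) c :=
    (h.tensorRep i hc (dualRep (Algebra.lsmul k k H))).of_surjective hc
      (lTensor_mem_intertwiners ρ (dualMap_mem_intertwiners i))
      (LinearMap.lTensor_surjective _ (LinearMap.dualMap_surjective_of_injective hi))
  have horbit : ρ.toLinearMap.flip v ∈ intertwiners (Algebra.lsmul k k K) ρ := fun x y ↦ by simp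
  refine hdual.of_injective hc (toSpanSingleton_mem_intertwiners horbit) ?_
  rw [← LinearMap.ker_eq_bot]
  refine LinearMap.ker_toSpanSingleton _ fun h₀ ↦ hv ?_
  rw [LinearEquiv.map_eq_zero_iff] at h₀
  simpa using congr($h₀ 1)

lemma HasHomRatio.lsmul [FiniteDimensional k K] (hi : Function.Injective i)
    (hc : IsHomRatioBound (coregularRep (i : K →ₐ[k] H)) c)
    (h : HasHomRatio (trivRep k K) (coregularRep (i : K →ₐ[k] H)) c) :
    HasHomRatio (Algebra.lsmul k k K) (coregularRep (i : K →ₐ[k] H)) c := by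
  have hH : HasHomRatio ((Algebra.lsmul k k H).comp (i : K →ₐ[k] H))
      (coregularRep (i : K →ₐ[k] H)) c :=
    (h.tensorRep i hc (Algebra.lsmul k k H)).of_injective hc (lid_symm_mem_intertwiners _)
      (TensorProduct.lid k H).symm.injective
  exact hH.of_injective hc (f := (i : K →ₐ[k] H).toLinearMap) (fun x y ↦ by simp) hi

/-- The dimension count in the Nichols–Zoeller theorem. -/
theorem finrank_eq_finrank_mul_finrank_invariantForms (hi : Function.Injective i) :
    finrank k H = finrank k K * finrank k (invariantForms (i : K →ₐ[k] H)) := by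
  have : FiniteDimensional k K := .of_injective (i : K →ₐ[k] H).toLinearMap hi
  have : Nontrivial K := (Bialgebra.counitAlgHom k K).toRingHom.domain_nontrivial
  obtain ⟨c, n, ρ, hn, hc, hρ⟩ := exists_isHomRatioBound_hasHomRatio (coregularRep (i : K →ₐ[k] H))
  have : Nonempty (Fin n) := ⟨⟨0, hn⟩⟩
  have htriv := hρ.trivRep_of_nontrivial hi hc
  have hreg := htriv.lsmul hi hc
  rw [HasHomRatio, (intertwinersTrivRepEquiv i).finrank_eq, finrank_self] at htriv
  rw [HasHomRatio, (intertwinersLsmulEquiv _).finrank_eq, Subspace.dual_finrank_eq] at hreg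
  have : (finrank k H : ℚ) = finrank k K * finrank k (invariantForms (i : K →ₐ[k] H)) := by
    rw [hreg, htriv]; push_cast; ring
  exact_mod_cast this

end NicholsZoeller

section DualHopfAlgebra

set_option maxSynthPendingDepth 3

open Coalgebra HopfAlgebra

/-- The dual space, with the convolution product when `Q` is a coalgebra. For `Q` a Hopf algebra
that is finite and projective, it carries the structure of the dual Hopf algebra. -/
abbrev ConvDual (k Q : Type*) [CommRing k] [AddCommGroup Q] [Module k Q] : Type _ :=
  WithConv (Q →ₗ[k] k)

namespace ConvDual

variable {k Q : Type*} [CommRing k] [Ring Q]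

section Contraction

variable [Algebra k Q] {M : Type*} [AddCommGroup M] [Module k M]

/-- Evaluation at the unit. -/
noncomputable def counitMap : ConvDual k Q →ₗ[k] k :=
  LinearMap.applyₗ (1 : Q) ∘ₗ (WithConv.linearEquiv k (Q →ₗ[k] k)).toLinearMap

@[simp]
lemma counitMap_apply (f : ConvDual k Q) : counitMap f = f 1 := rfl

variable [Module.Finite k Q] [Module.Projective k Q]

/-- Contracting the first tensor factor against elements of `Q`. -/
noncomputable def contract : ConvDual k Q ⊗[k] M ≃ₗ[k] (Q →ₗ[k] M) :=
  TensorProduct.congr (WithConv.linearEquiv k (Q →ₗ[k] k)) (.refl k M) ≪≫ₗ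
    dualTensorHomEquiv k Q M

@[simp]
lemma contract_tmul (f : ConvDual k Q) (m : M) (a : Q) : contract (f ⊗ₜ m) a = f a • m := by
  simp [contract, dualTensorHom_apply]

/-- The transpose of the multiplication. -/
noncomputable def comulMap : ConvDual k Q →ₗ[k] ConvDual k Q ⊗[k] ConvDual k Q :=
  contract.symm.toLinearMap ∘ₗ
    { toFun f :=
        { toFun a := .toConv (f.ofConv ∘ₗ LinearMap.mulLeft k a)
          map_add' a b := by ext; simp [add_mul]
          map_smul' c a := by ext; simp }
      map_add' f g := by ext; simp
      map_smul' c f := by ext; simp }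

@[simp]
lemma contract_comulMap (f : ConvDual k Q) (a b : Q) : contract (comulMap f) a b = f (a * b) := by
  simp [comulMap]

lemma contract_contract_assoc_tmul (u : ConvDual k Q ⊗[k] ConvDual k Q) (m : M) (a b : Q) :
    contract (contract (TensorProduct.assoc k _ _ _ (u ⊗ₜ m)) a) b = contract u a b • m := by
  induction u with
  | zero => simp
  | add u v hu hv => simp [TensorProduct.add_tmul, add_smul, hu, hv]
  | tmul f g => simp [smul_smul]

lemma contract_contract_assoc_rTensor (s : ConvDual k Q ⊗[k] M) (a b : Q) :
    contract (contract (TensorProduct.assoc k _ _ _ (comulMap.rTensor M s)) a) b =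
      contract s (a * b) := by
  induction s with
  | zero => simp
  | add u v hu hv => simp [hu, hv]
  | tmul f g => simp [contract_contract_assoc_tmul]

lemma contract_lTensor {N : Type*} [AddCommGroup N] [Module k N] (φ : M →ₗ[k] N)
    (s : ConvDual k Q ⊗[k] M) (a : Q) : contract (φ.lTensor _ s) a = φ (contract s a) := by
  induction s with
  | zero => simp
  | add u v hu hv => simp [hu, hv]
  | tmul f g => simp

lemma lid_rTensor_counitMap (s : ConvDual k Q ⊗[k] M) :
    TensorProduct.lid k M (counitMap.rTensor M s) = contract s 1 := by
  induction s with
  | zero => simp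
  | add u v hu hv => simp only [map_add, hu, hv, LinearMap.add_apply]
  | tmul f g => simp

lemma rid_lTensor_apply (φ : M →ₗ[k] k) (s : ConvDual k Q ⊗[k] M) (a : Q) :
    TensorProduct.rid k _ (φ.lTensor _ s) a = φ (contract s a) := by
  induction s with
  | zero => simp
  | add u v hu hv => simp only [map_add, hu, hv, LinearMap.add_apply, WithConv.ofConv_add]
  | tmul f g => simp [mul_comm]

noncomputable instance : Coalgebra k (ConvDual k Q) where
  comul := comulMap
  counit := counitMap
  coassoc := by
    ext f : 1
    apply contract.injective
    ext a : 1
    apply contract.injective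
    ext b c
    simp [contract_contract_assoc_rTensor, contract_lTensor, mul_assoc]
  rTensor_counit_comp_comul := by
    ext f : 1
    apply (TensorProduct.lid k _).injective
    ext a
    simp [lid_rTensor_counitMap]
  lTensor_counit_comp_comul := by
    ext f : 1
    apply (TensorProduct.rid k _).injective
    ext a
    simp [rid_lTensor_apply]

@[simp]
lemma contract_comul (f : ConvDual k Q) (a b : Q) :
    contract (comul (R := k) f) a b = f (a * b) := contract_comulMap f a b

@[simp]
lemma counit_apply (f : ConvDual k Q) : counit (R := k) f = f 1 := rfl

end Contraction

section Bialgebra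

variable [Bialgebra k Q] [Module.Finite k Q] [Module.Projective k Q]

lemma contract_mul (s t : ConvDual k Q ⊗[k] ConvDual k Q) {a b : Q} {ι κ : Type*}
    (ra : Coalgebra.Repr k a ι) (rb : Coalgebra.Repr k b κ) :
    contract (s * t) a b = ∑ j ∈ ra.index, ∑ l ∈ rb.index,
      contract s (ra.left j) (rb.left l) * contract t (ra.right j) (rb.right l) := by
  induction s with
  | zero => simp
  | add u v hu hv => simp [add_mul, hu, hv, Finset.sum_add_distrib]
  | tmul f g =>
    induction t with
    | zero => simp
    | add u v hu hv => simp [mul_add, hu, hv, Finset.sum_add_distrib]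
    | tmul f' g' =>
      simp only [Algebra.TensorProduct.tmul_mul_tmul, contract_tmul, WithConv.ofConv_smul,
        LinearMap.smul_apply, ra.convMul_apply, rb.convMul_apply, smul_eq_mul, Finset.sum_mul_sum]
      exact Finset.sum_congr rfl fun _ _ ↦ Finset.sum_congr rfl fun _ _ ↦ by ring

lemma contract_comul_mul (f g : ConvDual k Q) (a b : Q) :
    contract (M := ConvDual k Q) (comul (R := k) (f * g)) a b =
      contract (M := ConvDual k Q) (comul (R := k) f * comul (R := k) g) a b := by
  rw [contract_mul _ _ (ℛ k a) (ℛ k b), contract_comul,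
    ((ℛ k a).mul (ℛ k b)).convMul_apply]
  simp [Finset.sum_product]

noncomputable instance : Bialgebra k (ConvDual k Q) :=
  .mk' k _ (by simp) (fun {f g} ↦ by simp [Algebra.TensorProduct.one_def])
    (contract.injective (by ext; simp [Algebra.TensorProduct.one_def]))
    (fun {f g} ↦ contract.injective
      (LinearMap.ext fun a ↦ WithConv.ext (LinearMap.ext (contract_comul_mul f g a))))

end Bialgebra

section HopfAlgebra

variable [HopfAlgebra k Q]

/-- The transpose of the antipode. -/
noncomputable def antipodeMap : ConvDual k Q →ₗ[k] ConvDual k Q where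
  toFun f := .toConv (f.ofConv ∘ₗ antipode k)
  map_add' _ _ := rfl
  map_smul' _ _ := rfl

variable [Module.Finite k Q] [Module.Projective k Q]

lemma mul'_map_apply (φ ψ : ConvDual k Q →ₗ[k] ConvDual k Q) (φ' ψ' : Q →ₗ[k] Q)
    (hφ : ∀ f a, φ f a = f (φ' a)) (hψ : ∀ f a, ψ f a = f (ψ' a))
    (s : ConvDual k Q ⊗[k] ConvDual k Q) {a : Q} {ι : Type*} (r : Coalgebra.Repr k a ι) :
    LinearMap.mul' k _ (TensorProduct.map φ ψ s) a =
      ∑ j ∈ r.index, contract s (φ' (r.left j)) (ψ' (r.right j)) := by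
  induction s with
  | zero => simp
  | add u v hu hv =>
    simp only [map_add, hu, hv, LinearMap.add_apply, WithConv.ofConv_add, Finset.sum_add_distrib]
  | tmul f g =>
    rw [TensorProduct.map_tmul, LinearMap.mul'_apply, r.convMul_apply]
    simp [hφ, hψ]

noncomputable instance : HopfAlgebra k (ConvDual k Q) where
  antipode := antipodeMap
  mul_antipode_rTensor_comul := by
    ext f a
    have h := congr(f $(sum_antipode_mul_eq_algebraMap_counit (R := k) (ℛ k a)))
    have h' := mul'_map_apply antipodeMap .id (antipode k) .id (fun _ _ ↦ rfl) (fun _ _ ↦ rfl)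
      (comul (R := k) f) (ℛ k a)
    simp only [contract_comul, LinearMap.id_apply, ← map_sum, h] at h'
    simpa [LinearMap.rTensor, Algebra.algebraMap_eq_smul_one, mul_comm] using h'
  mul_antipode_lTensor_comul := by
    ext f a
    have h := congr(f $(sum_mul_antipode_eq_algebraMap_counit (R := k) (ℛ k a)))
    have h' := mul'_map_apply .id antipodeMap .id (antipode k) (fun _ _ ↦ rfl) (fun _ _ ↦ rfl)
      (comul (R := k) f) (ℛ k a)
    simp only [contract_comul, LinearMap.id_apply, ← map_sum, h] at h'
    simpa [LinearMap.lTensor, Algebra.algebraMap_eq_smul_one, mul_comm] using h'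

end HopfAlgebra

section Transpose

variable {Q' : Type*} [Ring Q'] [Bialgebra k Q] [Bialgebra k Q']

/-- The transpose of a morphism of bialgebras, as a linear map. -/
noncomputable def transposeLinear (p : Q →ₐc[k] Q') : ConvDual k Q' →ₗ[k] ConvDual k Q where
  toFun f := .toConv (f.ofConv ∘ₗ (p : Q →ₗc[k] Q').toLinearMap)
  map_add' _ _ := rfl
  map_smul' _ _ := rfl

@[simp]
lemma transposeLinear_apply (p : Q →ₐc[k] Q') (f : ConvDual k Q') (a : Q) :
    transposeLinear p f a = f (p a) := rfl

variable [Module.Finite k Q] [Module.Projective k Q] [Module.Finite k Q'] [Module.Projective k Q']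

lemma contract_map_transposeLinear (p : Q →ₐc[k] Q') (s : ConvDual k Q' ⊗[k] ConvDual k Q')
    (a b : Q) : contract (TensorProduct.map (transposeLinear p) (transposeLinear p) s) a b =
      contract s (p a) (p b) := by
  induction s with
  | zero => simp
  | add u v hu hv => simp [hu, hv]
  | tmul f g => simp

/-- The transpose of a morphism of bialgebras. -/
noncomputable def transpose (p : Q →ₐc[k] Q') : ConvDual k Q' →ₐc[k] ConvDual k Q :=
  .ofAlgHom
    (.ofLinearMap (transposeLinear p) (by ext; simp)
      (fun f g ↦ WithConv.ext (LinearMap.convMul_comp_coalgHom_distrib f g (p : Q →ₗc[k] Q'))))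
    (by ext; simp)
    (by
      ext f
      apply contract.injective
      ext a b
      refine (contract_map_transposeLinear p (comul f) a b).trans ?_
      simp)

lemma transpose_injective {p : Q →ₐc[k] Q'} (hp : Function.Surjective p) :
    Function.Injective (transpose p) := by
  intro f g h
  ext b
  obtain ⟨a, rfl⟩ := hp b
  exact congr($h a)

end Transpose

end ConvDual

theorem finrank_dvd_finrank_of_surjective {k Q Q' : Type*} [Field k] [Ring Q] [Ring Q']
    [HopfAlgebra k Q] [HopfAlgebra k Q'] [FiniteDimensional k Q] {p : Q →ₐc[k] Q'}
    (hp : Function.Surjective p) : Module.finrank k Q' ∣ Module.finrank k Q := by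
  have : FiniteDimensional k Q' := .of_surjective (p : Q →ₗc[k] Q').toLinearMap hp
  have : FiniteDimensional k (ConvDual k Q) := .of_surjective
    (WithConv.linearEquiv k (Q →ₗ[k] k)).symm.toLinearMap (LinearEquiv.surjective _)
  have h := finrank_eq_finrank_mul_finrank_invariantForms (ConvDual.transpose_injective hp)
  rw [(WithConv.linearEquiv k (Q →ₗ[k] k)).finrank_eq,
    (WithConv.linearEquiv k (Q' →ₗ[k] k)).finrank_eq, Subspace.dual_finrank_eq,
    Subspace.dual_finrank_eq] at h
  exact ⟨_, h⟩

end DualHopfAlgebra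

section HopfSubalgebra

open Coalgebra HopfAlgebra

variable {k H : Type*} [CommRing k] [Ring H] [HopfAlgebra k H] {K : Subalgebra k H}
  [Module.Flat k H] [Module.Flat k K]

namespace IsHopfSubalgebra

variable (K) in
lemma map_val_val_injective : Function.Injective (Algebra.TensorProduct.map K.val K.val) :=
  TensorProduct.map_injective_of_flat_flat _ _ Subtype.val_injective Subtype.val_injective

/-- The comultiplication of a Hopf subalgebra. -/
noncomputable def comulAlgHom (hK : IsHopfSubalgebra k K) : K →ₐ[k] K ⊗[k] K :=
  (AlgEquiv.ofInjective _ (map_val_val_injective K)).symm.toAlgHom.comp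
    (((Bialgebra.comulAlgHom k H).comp K.val).codRestrict _ fun x ↦ hK.1 x x.2)

lemma map_val_val_comulAlgHom (hK : IsHopfSubalgebra k K) (x : K) :
    TensorProduct.map K.val.toLinearMap K.val.toLinearMap (hK.comulAlgHom x) =
      comul (R := k) (x : H) := by
  have h := AlgEquiv.apply_symm_apply (AlgEquiv.ofInjective _ (map_val_val_injective K))
    ((((Bialgebra.comulAlgHom k H).comp K.val).codRestrict _ fun x ↦ hK.1 x x.2) x)
  exact congr(($h : H ⊗[k] H))

lemma map_val_val_comp_comulAlgHom (hK : IsHopfSubalgebra k K) :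
    TensorProduct.map K.val.toLinearMap K.val.toLinearMap ∘ₗ hK.comulAlgHom.toLinearMap =
      comul ∘ₗ K.val.toLinearMap :=
  LinearMap.ext hK.map_val_val_comulAlgHom

lemma assoc_rTensor_comulAlgHom (hK : IsHopfSubalgebra k K) (x : K) :
    TensorProduct.assoc k K K K
        (hK.comulAlgHom.toLinearMap.rTensor K (hK.comulAlgHom x)) =
      hK.comulAlgHom.toLinearMap.lTensor K (hK.comulAlgHom x) := by
  have hinj : Function.Injective (TensorProduct.map K.val.toLinearMap
      (TensorProduct.map K.val.toLinearMap K.val.toLinearMap)) :=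
    TensorProduct.map_injective_of_flat_flat _ _ Subtype.val_injective (map_val_val_injective K)
  apply hinj
  rw [TensorProduct.map_map_assoc, LinearMap.map_rTensor, LinearMap.map_lTensor,
    map_val_val_comp_comulAlgHom, ← LinearMap.rTensor_map, ← LinearMap.lTensor_map,
    map_val_val_comulAlgHom, coassoc_apply]

lemma rTensor_counit_comulAlgHom (hK : IsHopfSubalgebra k K) (x : K) :
    (counit ∘ₗ K.val.toLinearMap).rTensor K (hK.comulAlgHom x) = 1 ⊗ₜ[k] x := by
  have hinj : Function.Injective (K.val.toLinearMap.lTensor k) :=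
    Module.Flat.lTensor_preserves_injective_linearMap _ Subtype.val_injective
  apply hinj
  rw [LinearMap.rTensor, LinearMap.lTensor_map, LinearMap.comp_id, ← LinearMap.rTensor_map,
    map_val_val_comulAlgHom, rTensor_counit_comul]
  rfl

lemma lTensor_counit_comulAlgHom (hK : IsHopfSubalgebra k K) (x : K) :
    (counit ∘ₗ K.val.toLinearMap).lTensor K (hK.comulAlgHom x) = x ⊗ₜ[k] 1 := by
  have hinj : Function.Injective (K.val.toLinearMap.rTensor k) :=
    Module.Flat.rTensor_preserves_injective_linearMap _ Subtype.val_injective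
  apply hinj
  rw [LinearMap.lTensor, LinearMap.rTensor_map, LinearMap.comp_id, ← LinearMap.lTensor_map,
    map_val_val_comulAlgHom, lTensor_counit_comul]
  rfl

/-- A Hopf subalgebra, as a bialgebra. -/
noncomputable abbrev bialgebra (hK : IsHopfSubalgebra k K) : Bialgebra k K :=
  .ofAlgHom hK.comulAlgHom ((Bialgebra.counitAlgHom k H).comp K.val)
    (AlgHom.ext hK.assoc_rTensor_comulAlgHom) (AlgHom.ext hK.rTensor_counit_comulAlgHom)
    (AlgHom.ext hK.lTensor_counit_comulAlgHom)

/-- The antipode of a Hopf subalgebra. -/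
noncomputable def antipodeMap (hK : IsHopfSubalgebra k K) : K →ₗ[k] K :=
  (antipode k (A := H)).restrict (p := Subalgebra.toSubmodule K) (q := Subalgebra.toSubmodule K)
    hK.2

lemma val_mul'_map_comulAlgHom (hK : IsHopfSubalgebra k K) {f g : K →ₗ[k] K} {f' g' : H →ₗ[k] H}
    (hf : ∀ y, (f y : H) = f' y) (hg : ∀ y, (g y : H) = g' y) (x : K) :
    (LinearMap.mul' k K (TensorProduct.map f g (hK.comulAlgHom x)) : H) =
      LinearMap.mul' k H (TensorProduct.map f' g' (comul (R := k) (x : H))) := by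
  have hf' : K.val.toLinearMap ∘ₗ f = f' ∘ₗ K.val.toLinearMap := LinearMap.ext hf
  have hg' : K.val.toLinearMap ∘ₗ g = g' ∘ₗ K.val.toLinearMap := LinearMap.ext hg
  rw [← hK.map_val_val_comulAlgHom, ← LinearMap.comp_apply (TensorProduct.map f' g'),
    ← TensorProduct.map_comp, ← hf', ← hg', TensorProduct.map_comp, LinearMap.comp_apply]
  exact congr($(K.val.comp_mul') (TensorProduct.map f g (hK.comulAlgHom x)))

/-- A Hopf subalgebra, as a Hopf algebra. -/
noncomputable abbrev hopfAlgebra (hK : IsHopfSubalgebra k K) : HopfAlgebra k K where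
  __ := hK.bialgebra
  antipode := hK.antipodeMap
  mul_antipode_rTensor_comul := LinearMap.ext fun x ↦ Subtype.ext <|
    (hK.val_mul'_map_comulAlgHom (fun _ ↦ rfl) (fun _ ↦ rfl) x).trans
      (mul_antipode_rTensor_comul_apply _)
  mul_antipode_lTensor_comul := LinearMap.ext fun x ↦ Subtype.ext <|
    (hK.val_mul'_map_comulAlgHom (fun _ ↦ rfl) (fun _ ↦ rfl) x).trans
      (mul_antipode_lTensor_comul_apply _)

end IsHopfSubalgebra

end HopfSubalgebra

theorem IsHopfSubalgebra.finrank_eq_finrank_mul_finrank_invariantForms {k H : Type*} [Field k]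
    [Ring H] [HopfAlgebra k H] [FiniteDimensional k H] {K : Subalgebra k H}
    (hK : IsHopfSubalgebra k K) :
    Module.finrank k H = Module.finrank k K * Module.finrank k (invariantForms K.val) :=
  let := hK.hopfAlgebra
  _root_.finrank_eq_finrank_mul_finrank_invariantForms (i := .ofAlgHom K.val rfl
    (AlgHom.ext hK.map_val_val_comulAlgHom)) Subtype.val_injective

section AugmentationIdeal

open Coalgebra HopfAlgebra

variable {k H : Type*} [CommRing k] [Ring H]

section Hopf

variable [HopfAlgebra k H] {K : Subalgebra k H}

lemma adjR_tmul {h : H} {ι : Type*} (r : Repr k h ι) (x : H) :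
    adjR k H (h ⊗ₜ x) = ∑ j ∈ r.index, antipode k (r.left j) * (x * r.right j) := by
  simp [adjR, ← r.eq, TensorProduct.sum_tmul]

lemma counit_adjR_tmul (h x : H) :
    counit (R := k) (adjR k H (h ⊗ₜ x)) = counit (R := k) h * counit (R := k) x := by
  have hcounit := congr(counit (R := k) $(sum_counit_smul (ℛ k h)))
  simp only [map_sum, map_smul, smul_eq_mul] at hcounit
  rw [adjR_tmul (ℛ k h), ← hcounit, map_sum, Finset.sum_mul]
  refine Finset.sum_congr rfl fun j _ ↦ ?_
  simp only [Bialgebra.counit_mul, counit_antipode]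
  ring

/-- In the convolution algebra `End H`, the right adjoint action on `x` is `S * (x * ·)`, and `S`
is inverse to the identity. -/
lemma sum_mul_adjR_tmul {h : H} {ι : Type*} (r : Repr k h ι) (x : H) :
    ∑ j ∈ r.index, r.left j * adjR k H (r.right j ⊗ₜ x) = x * h := by
  have hadj : WithConv.toConv (antipode k) * WithConv.toConv (LinearMap.mulLeft k x) =
      WithConv.toConv (adjR k H ∘ₗ (TensorProduct.mk k H H).flip x) := by
    ext h
    simp [(ℛ k h).convMul_apply, adjR_tmul (ℛ k h)]
  have hcancel : WithConv.toConv LinearMap.id *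
      WithConv.toConv (adjR k H ∘ₗ (TensorProduct.mk k H H).flip x) =
        WithConv.toConv (LinearMap.mulLeft k x) := by
    rw [← hadj, ← mul_assoc, LinearMap.id_mul_antipode, one_mul]
  simpa [r.convMul_apply] using congr($hcancel h)

lemma apply_mul_mul_of_mem_invariantForms
    (hK : ∀ h, ∀ x ∈ K, adjR k H (h ⊗ₜ x) ∈ K) {T : Module.Dual k H}
    (hT : T ∈ invariantForms K.val) (a b : H) {x : H} (hx : x ∈ K) :
    T (a * x * b) = counit (R := k) x * T (a * b) := by
  have hcounit := congr(T (a * TensorProduct.rid k H $(sum_tmul_counit_eq (ℛ k b))))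
  simp only [map_sum, TensorProduct.rid_tmul, Finset.mul_sum, mul_smul_comm, map_smul, one_smul,
    smul_eq_mul] at hcounit
  simp only [mul_assoc, ← sum_mul_adjR_tmul (ℛ k b) x, ← hcounit, Finset.mul_sum, map_sum]
  refine Finset.sum_congr rfl fun j _ ↦ ?_
  have hj := hT (a * (ℛ k b).left j) ⟨_, hK ((ℛ k b).right j) x hx⟩
  rw [Subalgebra.val_apply, counit_adjR_tmul] at hj
  rw [← mul_assoc, hj]
  ring

end Hopf

/-- The two-sided ideal of `H` generated by the augmentation ideal `K⁺ = K ∩ ker ε`; it is `HK⁺`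
when `K` is normal. -/
abbrev augmentationSpan [Bialgebra k H] (K : Subalgebra k H) : TwoSidedIdeal H :=
  TwoSidedIdeal.span {x : H | x ∈ K ∧ counit (R := k) x = 0}

lemma sub_algebraMap_counit_mem_augmentationSpan [Bialgebra k H] {K : Subalgebra k H} {x : H}
    (hx : x ∈ K) : x - algebraMap k H (counit x) ∈ augmentationSpan K :=
  TwoSidedIdeal.subset_span ⟨sub_mem hx (K.algebraMap_mem _), by simp⟩

lemma augmentationSpan_le_comap {H' : Type*} [Ring H'] [Bialgebra k H] [Bialgebra k H']
    {π : H →ₐc[k] H'} {K : Subalgebra k H} {Z : Subalgebra k H'}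
    (h : K.map (π : H →ₐ[k] H') ≤ Z) :
    augmentationSpan K ≤ (augmentationSpan Z).comap (π : H →ₐ[k] H') :=
  TwoSidedIdeal.span_le.2 fun x hx ↦ (TwoSidedIdeal.mem_comap _).2 <|
    TwoSidedIdeal.subset_span ⟨h ⟨x, hx.1, rfl⟩, (CoalgHomClass.counit_comp_apply π x).trans hx.2⟩

variable [HopfAlgebra k H] {K : Subalgebra k H}

lemma invariantForms_val_eq_dualAnnihilator (hK : ∀ h, ∀ x ∈ K, adjR k H (h ⊗ₜ x) ∈ K) :
    invariantForms K.val =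
      ((augmentationSpan K).asIdeal.restrictScalars k).dualAnnihilator := by
  ext T
  rw [Submodule.mem_dualAnnihilator]
  constructor
  · intro hT y hy
    rw [Submodule.restrictScalars_mem, TwoSidedIdeal.mem_asIdeal,
      TwoSidedIdeal.mem_span_iff_mem_addSubgroup_closure] at hy
    induction hy using AddSubgroup.closure_induction with
    | zero => simp
    | add a b _ _ ha hb => rw [map_add, ha, hb, add_zero]
    | neg a _ ha => rw [map_neg, ha, neg_zero]
    | mem y hy =>
      obtain ⟨_, ⟨a, -, x, ⟨hx, hx₀⟩, rfl⟩, b, -, rfl⟩ := hy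
      simp only [apply_mul_mul_of_mem_invariantForms hK hT a b hx, hx₀, zero_mul]
  · intro hT h x
    have hzero := hT (h * (x - algebraMap k H (counit x.1)))
      ((augmentationSpan K).mul_mem_left _ _ (sub_algebraMap_counit_mem_augmentationSpan x.2))
    simpa [mul_sub, sub_eq_zero, Algebra.algebraMap_eq_smul_one] using hzero

lemma map_mkₐ_comul_eq_zero (hK : IsHopfSubalgebra k K) {x : H} (hx : x ∈ K)
    (hx₀ : counit (R := k) x = 0) :
    Algebra.TensorProduct.map (Ideal.Quotient.mkₐ k (augmentationSpan K).asIdeal)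
      (Ideal.Quotient.mkₐ k (augmentationSpan K).asIdeal) (comul x) = 0 := by
  let q := (Ideal.Quotient.mkₐ k (augmentationSpan K).asIdeal).toLinearMap
  let η := Algebra.linearMap k (H ⧸ (augmentationSpan K).asIdeal)
  have hq : q ∘ₗ K.toSubmodule.subtype = (η ∘ₗ counit) ∘ₗ K.toSubmodule.subtype :=
    LinearMap.ext fun y ↦ (Ideal.Quotient.mk_eq_mk_iff_sub_mem _ _).2
      (sub_algebraMap_counit_mem_augmentationSpan y.2)
  obtain ⟨s, hs⟩ := hK.1 x hx
  calc TensorProduct.map q q (comul x)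
      = TensorProduct.map (η ∘ₗ counit) (η ∘ₗ counit) (comul x) := by
        rw [← hs, ← LinearMap.comp_apply, ← LinearMap.comp_apply, ← TensorProduct.map_comp,
          ← TensorProduct.map_comp, hq]
    _ = TensorProduct.map (η ∘ₗ counit) η (counit.lTensor H (comul x)) := by
        rw [LinearMap.map_lTensor]
    _ = 0 := by simp [hx₀]

lemma antipode_mem_augmentationSpan (hK : IsHopfSubalgebra k K) {x : H}
    (hx : x ∈ augmentationSpan K) : antipode k x ∈ augmentationSpan K := by
  induction hx using TwoSidedIdeal.span_induction with
  | mem _ hx => exact TwoSidedIdeal.subset_span ⟨hK.2 _ hx.1, by simpa using hx.2⟩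
  | zero => simp
  | add _ _ _ _ hx hy => simpa using add_mem hx hy
  | neg _ _ hx => simpa using neg_mem hx
  | left_absorb _ _ _ hx =>
    simpa [antipode_mul_antidistrib] using TwoSidedIdeal.mul_mem_right _ _ _ hx
  | right_absorb _ _ _ hx =>
    simpa [antipode_mul_antidistrib] using TwoSidedIdeal.mul_mem_left _ _ _ hx

theorem IsHopfSubalgebra.isHopfIdeal (hK : IsHopfSubalgebra k K) :
    (augmentationSpan K).asIdeal.IsHopfIdeal k where
  counit_eq_zero _ hx :=
    have h : augmentationSpan K ≤ TwoSidedIdeal.ker (Bialgebra.counitAlgHom k H) :=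
      TwoSidedIdeal.span_le.2 fun _ hx ↦ (TwoSidedIdeal.mem_ker _).2 hx.2
    (TwoSidedIdeal.mem_ker (Bialgebra.counitAlgHom k H)).1 (h hx)
  map_mkQ_comul_eq_zero _ hx :=
    have h : augmentationSpan K ≤ TwoSidedIdeal.ker
        ((Algebra.TensorProduct.map (Ideal.Quotient.mkₐ k (augmentationSpan K).asIdeal)
          (Ideal.Quotient.mkₐ k (augmentationSpan K).asIdeal)).comp
            (Bialgebra.comulAlgHom k H)) :=
      TwoSidedIdeal.span_le.2 fun _ hx ↦ (TwoSidedIdeal.mem_ker _).2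
        (map_mkₐ_comul_eq_zero hK hx.1 hx.2)
    (TwoSidedIdeal.mem_ker _).1 (h hx)
  antipode_mem _ hx := antipode_mem_augmentationSpan hK hx

theorem IsHopfSubalgebra.finrank_eq_finrank_mul_finrank_quotient {k H : Type*} [Field k] [Ring H]
    [HopfAlgebra k H] [FiniteDimensional k H] {K : Subalgebra k H} (hK : IsHopfSubalgebra k K)
    (hadj : ∀ h, ∀ x ∈ K, adjR k H (h ⊗ₜ x) ∈ K) :
    Module.finrank k H =
      Module.finrank k K * Module.finrank k (H ⧸ (augmentationSpan K).asIdeal) := by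
  rw [hK.finrank_eq_finrank_mul_finrank_invariantForms,
    invariantForms_val_eq_dualAnnihilator hadj,
    ← (Submodule.dualQuotEquivDualAnnihilator _).finrank_eq, Subspace.dual_finrank_eq]
  rfl

end AugmentationIdeal

section Quotients

variable {k A B : Type*} [CommRing k] [Ring A] [Ring B]

theorem exists_surjective_algHom_ringConQuotient [Algebra k A] [Algebra k B] {f : A →ₐ[k] B}
    (hf : Function.Surjective f) {I : TwoSidedIdeal A} {J : TwoSidedIdeal B} (hIJ : I ≤ J.comap f) :
    ∃ g : I.ringCon.Quotient →ₐ[k] J.ringCon.Quotient,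
      Function.Surjective g ∧ ∀ a, g (I.ringCon.mk' a) = J.ringCon.mk' (f a) := by
  have hker : I.ringCon ≤ RingCon.ker ((J.ringCon.mkₐ k).comp f).toRingHom := fun x y hxy ↦ by
    have hmem := hIJ ((I.rel_iff x y).1 hxy)
    rw [TwoSidedIdeal.mem_comap, map_sub] at hmem
    exact (RingCon.eq _).2 ((J.rel_iff _ _).2 hmem)
  exact ⟨RingCon.liftₐ I.ringCon _ hker,
    .of_comp (g := I.ringCon.mk') (J.ringCon.mk'_surjective.comp hf), fun _ ↦ rfl⟩

theorem exists_surjective_bialgHom_quotient [Bialgebra k A] [Bialgebra k B] {π : A →ₐc[k] B}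
    (hπ : Function.Surjective π) {I : Ideal A} [I.IsTwoSided] [(I.restrictScalars k).IsCoideal]
    {J : Ideal B} [J.IsTwoSided] [(J.restrictScalars k).IsCoideal]
    (hIJ : I ≤ J.comap (π : A →ₐ[k] B)) :
    ∃ p : A ⧸ I →ₐc[k] B ⧸ J,
      Function.Surjective p ∧ ∀ a, p (Ideal.Quotient.mk I a) = Ideal.Quotient.mk J (π a) := by
  let q : A →ₐc[k] B ⧸ J := (Bialgebra.Quotient.mkBialgHom J).comp π
  let f : A ⧸ I →ₐ[k] B ⧸ J := Ideal.quotientMapₐ J (π : A →ₐ[k] B) hIJ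
  refine ⟨.ofAlgHom f ?_ ?_, Ideal.quotientMap_surjective (H := hIJ) hπ, fun _ ↦ rfl⟩
  · refine Ideal.Quotient.algHom_ext k (AlgHom.ext fun x ↦ ?_)
    exact CoalgHomClass.counit_comp_apply q x
  · refine Ideal.Quotient.algHom_ext k (AlgHom.ext fun x ↦ ?_)
    refine Eq.trans ?_ (CoalgHomClass.map_comp_comul_apply q x)
    exact TensorProduct.map_map ..

end Quotients

theorem stmt_17_general (k H H' : Type*) [Field k]
    [Ring H] [HopfAlgebra k H] [FiniteDimensional k H] [Ring H'] [HopfAlgebra k H']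
    (π : H →ₐc[k] H') (hπ : Function.Surjective π)
    (K : Subalgebra k H) (hK : IsHopfSubalgebra k K)
    (hKadj : ∀ h, ∀ x ∈ K, adjR k H (h ⊗ₜ[k] x) ∈ K)
    (Z : Subalgebra k H') (hZ : IsHopfSubalgebra k Z)
    (hZadj : ∀ h, ∀ x ∈ Z, adjR k H' (h ⊗ₜ[k] x) ∈ Z)
    (hπK : K.map (π : H →ₐ[k] H') ≤ Z) :
    let IK : TwoSidedIdeal H :=
      TwoSidedIdeal.span {x : H | x ∈ K ∧ Coalgebra.counit (R := k) x = 0}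
    let IZ : TwoSidedIdeal H' :=
      TwoSidedIdeal.span {x : H' | x ∈ Z ∧ Coalgebra.counit (R := k) x = 0}
    (∃ f : IK.ringCon.Quotient →ₐ[k] IZ.ringCon.Quotient,
      Function.Surjective f ∧
        ∀ h : H, f (IK.ringCon.mk' h) = IZ.ringCon.mk' (π h)) ∧
      Module.finrank k H' / Module.finrank k Z ∣ Module.finrank k H / Module.finrank k K := by
  have hle := augmentationSpan_le_comap hπK
  refine ⟨exists_surjective_algHom_ringConQuotient hπ hle, ?_⟩
  have : FiniteDimensional k H' := .of_surjective (π : H →ₗ[k] H') hπ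
  have : Nontrivial H := (Bialgebra.counitAlgHom k H).toRingHom.domain_nontrivial
  have : Nontrivial H' := (Bialgebra.counitAlgHom k H').toRingHom.domain_nontrivial
  have := hK.isHopfIdeal
  have := hZ.isHopfIdeal
  obtain ⟨p, hp, -⟩ := exists_surjective_bialgHom_quotient hπ
    (I := (augmentationSpan K).asIdeal) (J := (augmentationSpan Z).asIdeal)
    fun _ hx ↦ (TwoSidedIdeal.mem_comap _).1 (hle hx)
  rw [hK.finrank_eq_finrank_mul_finrank_quotient hKadj,
    hZ.finrank_eq_finrank_mul_finrank_quotient hZadj,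
    Nat.mul_div_cancel_left _ Module.finrank_pos, Nat.mul_div_cancel_left _ Module.finrank_pos]
  exact finrank_dvd_finrank_of_surjective hp

/-- If `π : H → H̄` is a surjective Hopf algebra map, `K` a normal Hopf subalgebra of `H` with
`π(K)` contained in a central normal Hopf subalgebra `Z̄` of `H̄`, then there is a surjective
algebra map `H/HK⁺ → H̄/H̄Z̄⁺` induced by `π`, and `dim H̄ / dim Z̄` divides `dim H / dim K`. -/
theorem stmt_17 (k H H' : Type*) [Field k]
    [Ring H] [HopfAlgebra k H] [FiniteDimensional k H]
    [Ring H'] [HopfAlgebra k H'] [FiniteDimensional k H']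
    (π : H →ₐc[k] H') (hπ : Function.Surjective π)
    (K : Subalgebra k H) (hK : IsHopfSubalgebra k K) (hKnorm : IsNormalHopfSubalgebra k K)
    (Z : Subalgebra k H') (hZ : IsHopfSubalgebra k Z) (hZnorm : IsNormalHopfSubalgebra k Z)
    (hZcentral : Z ≤ Subalgebra.center k H')
    (hπK : K.map (π : H →ₐ[k] H') ≤ Z) :
    let IK : TwoSidedIdeal H :=
      TwoSidedIdeal.span {x : H | x ∈ K ∧ Coalgebra.counit (R := k) x = 0}
    let IZ : TwoSidedIdeal H' :=
      TwoSidedIdeal.span {x : H' | x ∈ Z ∧ Coalgebra.counit (R := k) x = 0}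
    (∃ f : IK.ringCon.Quotient →ₐ[k] IZ.ringCon.Quotient,
      Function.Surjective f ∧
        ∀ h : H, f (IK.ringCon.mk' h) = IZ.ringCon.mk' (π h)) ∧
      Module.finrank k H' / Module.finrank k Z ∣ Module.finrank k H / Module.finrank k K :=
  stmt_17_general k H H' π hπ K hK (fun h x hx ↦ (hKnorm h x hx).2) Z hZ
    (fun h x hx ↦ (hZnorm h x hx).2) hπK
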